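/- Let R be a henselian Gorenstein Noetherian local ring with dim R > 0 satisfying the generalized Auslander–Reiten condition (GARC), and let 𝒳 be a resolving subcategory of the category of finitely generated R-modules. Then 𝒳 is strictly contained in 𝒞(𝒳) (i.e. there exists a module in 𝒞(𝒳) outside 𝒳) if and only if every module in 𝒳 is maximal Cohen–Macaulay. -/

import Mathlib

open CategoryTheory IsLocalRing

universe u

noncomputable section

/-- The `i`-th Ext module of two `R`-modules. -/
abbrev ExtMod (R : Type u) [CommRing R] (i : ℕ) (M N : ModuleCat.{u} R) : ModuleCat R :=
  ((Ext R (ModuleCat.{u} R) i).obj (Opposite.op M)).obj N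

/-- Vanishing of the `i`-th Ext module: `Ext_R^i(M, N) = 0`. -/
def ExtVanish (R : Type u) [CommRing R] (i : ℕ) (M N : ModuleCat.{u} R) : Prop :=
  Subsingleton (ExtMod R i M N)

variable (R : Type u) [CommRing R]

/-- `0 → A → B → C → 0` is a short exact sequence. -/
def IsSES {A B C : ModuleCat.{u} R} (f : A →ₗ[R] B) (g : B →ₗ[R] C) : Prop :=
  Function.Injective f ∧ Function.Exact f g ∧ Function.Surjective g

/-- A resolving subcategory of the category of finitely generated `R`-modules. -/
structure IsResolving (𝒳 : Set (ModuleCat.{u} R)) : Prop where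
  finite : ∀ M ∈ 𝒳, Module.Finite R M
  isoClosed : ∀ {M N : ModuleCat.{u} R}, M ∈ 𝒳 → (↥M ≃ₗ[R] ↥N) → N ∈ 𝒳
  freeMem : ∀ M : ModuleCat.{u} R, Module.Finite R M → Module.Free R M → M ∈ 𝒳
  summandClosed : ∀ M N : ModuleCat.{u} R, ModuleCat.of R (↥M × ↥N) ∈ 𝒳 → M ∈ 𝒳
  extClosed : ∀ (A B C : ModuleCat.{u} R) (f : A →ₗ[R] B) (g : B →ₗ[R] C),
    IsSES R f g → A ∈ 𝒳 → C ∈ 𝒳 → B ∈ 𝒳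
  kerClosed : ∀ (A B C : ModuleCat.{u} R) (f : A →ₗ[R] B) (g : B →ₗ[R] C),
    IsSES R f g → B ∈ 𝒳 → C ∈ 𝒳 → A ∈ 𝒳

/-- `f : X → M` is a right `𝒳`-approximation of `M`. -/
def IsRightApprox (𝒳 : Set (ModuleCat.{u} R)) {X M : ModuleCat.{u} R} (f : X →ₗ[R] M) : Prop :=
  X ∈ 𝒳 ∧ ∀ W ∈ 𝒳, ∀ g : ↥W →ₗ[R] ↥M, ∃ h : ↥W →ₗ[R] ↥X, f ∘ₗ h = g

/-- `M` admits a right `𝒳`-approximation. -/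
def HasRightApprox (𝒳 : Set (ModuleCat.{u} R)) (M : ModuleCat.{u} R) : Prop :=
  ∃ (X : ModuleCat.{u} R) (f : X →ₗ[R] M), IsRightApprox R 𝒳 f

/-- `𝒳` is contravariantly infinite: no finitely generated module outside `𝒳` admits
a right `𝒳`-approximation. -/
def ContravariantlyInfinite (𝒳 : Set (ModuleCat.{u} R)) : Prop :=
  ∀ M : ModuleCat.{u} R, Module.Finite R M → M ∉ 𝒳 → ¬ HasRightApprox R 𝒳 M

/-- `𝒳` is contravariantly finite: every finitely generated module admits
a right `𝒳`-approximation. -/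
def ContravariantlyFinite (𝒳 : Set (ModuleCat.{u} R)) : Prop :=
  ∀ M : ModuleCat.{u} R, Module.Finite R M → HasRightApprox R 𝒳 M

/-- The restricted functor `Hom_R(-, C)|_𝒳` is finitely presented, i.e. `C ∈ 𝒞(𝒳)`. -/
def MemCC (𝒳 : Set (ModuleCat.{u} R)) (C : ModuleCat.{u} R) : Prop :=
  ∃ (X₀ X₁ : ModuleCat.{u} R) (g : ↥X₁ →ₗ[R] ↥X₀) (f : ↥X₀ →ₗ[R] ↥C), X₀ ∈ 𝒳 ∧ X₁ ∈ 𝒳 ∧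
    ∀ W ∈ 𝒳, Function.Surjective (fun h : ↥W →ₗ[R] ↥X₀ => f ∘ₗ h) ∧
      Function.Exact (fun h : ↥W →ₗ[R] ↥X₁ => g ∘ₗ h) (fun h : ↥W →ₗ[R] ↥X₀ => f ∘ₗ h)

/-- `𝒳` is coherent: `𝒞(𝒳) = rap 𝒳`. -/
def Coherent (𝒳 : Set (ModuleCat.{u} R)) : Prop :=
  ∀ M : ModuleCat.{u} R, Module.Finite R M → (MemCC R 𝒳 M ↔ HasRightApprox R 𝒳 M)

/-- The right Ext-orthogonal class `𝒳^⊥` of a class `𝒳` of finitely generated modules. -/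
def XPerp (𝒳 : Set (ModuleCat.{u} R)) : Set (ModuleCat.{u} R) :=
  {Y | Module.Finite R Y ∧ ∀ X ∈ 𝒳, ∀ i, 0 < i → ExtVanish R i X Y}

/-- The projective dimension of `M` is at most `n`. -/
def ProjDimLE (M : ModuleCat.{u} R) (n : ℕ) : Prop :=
  ∀ N : ModuleCat.{u} R, ∀ i, n < i → ExtVanish R i M N

/-- The depth of an `R`-module over a local ring: `inf { i | Ext^i(k, M) ≠ 0 }`. -/
def moduleDepth [IsLocalRing R] (M : ModuleCat.{u} R) : ℕ∞ :=
  sInf ((fun i : ℕ => (i : ℕ∞)) ''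
    {i : ℕ | ¬ ExtVanish R i (ModuleCat.of R (ResidueField R)) M})

/-- `M` is a maximal Cohen–Macaulay `R`-module: `depth M ≥ dim R`. -/
def IsMCM [IsLocalRing R] (M : ModuleCat.{u} R) : Prop :=
  ringKrullDim R ≤ (moduleDepth R M : WithBot ℕ∞)

/-- A Gorenstein local ring: `∃ n, Ext^i(M, R) = 0` for every finitely generated `M`
and every `i > n`. -/
def IsGorensteinLocalRing : Prop :=
  ∃ n : ℕ, ∀ M : ModuleCat.{u} R, Module.Finite R M →
    ∀ i, n < i → ExtVanish R i M (ModuleCat.of R R)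

/-- A regular local ring: Noetherian local with `dim R = dim_k 𝔪/𝔪²`. -/
def IsRegularLocal [IsLocalRing R] : Prop :=
  IsNoetherianRing R ∧
    ringKrullDim R = (Module.finrank (ResidueField R) (CotangentSpace R) : ℕ)

/-- Witness that the local ring `R` is a complete intersection: its `𝔪`-adic completion
is `Q/(f₁, …, f_c)` for a regular local ring `Q` and a `Q`-regular sequence `f₁, …, f_c`. -/
structure CompleteIntersectionWitness [IsLocalRing R] : Type (u + 1) where
  Q : Type u
  [commRing : CommRing Q]
  [localRing : IsLocalRing Q]
  regular : IsRegularLocal Q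
  fs : List Q
  regSeq : RingTheory.Sequence.IsRegular Q fs
  equiv : AdicCompletion (maximalIdeal R) R ≃+* Q ⧸ Ideal.span {x : Q | x ∈ fs}

/-- The local ring `R` is a complete intersection. -/
def IsCompleteIntersection [IsLocalRing R] : Prop :=
  Nonempty (CompleteIntersectionWitness R)

end

/-!
If every module in `𝒳` is maximal Cohen–Macaulay, then for a nonzerodivisor `x ∈ 𝔪` the module
`R / xR` lies outside `𝒳`, while multiplication by `x` on `R` presents `Hom(·, R / xR)` on `𝒳`,
because `Ext¹(W, R) = 0` for `W ∈ 𝒳`.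

Conversely, let `C ∈ 𝒞(𝒳) ∖ 𝒳`. Fitting's lemma over a henselian ring gives a minimal right
`𝒳`-approximation of `C` with kernel `K ≠ 0`, and finite presentation gives one `Y → K` of `K` as
well. By Wakamatsu's lemma both `K` and the kernel of `Y → K` lie in `𝒳^⊥`, so `Y ∈ 𝒳 ∩ 𝒳^⊥`. Now
(GARC) bounds the projective dimension of `Y`, and since `Y` is self-orthogonal it is free. Hence
`R ∈ 𝒳^⊥`, and over a Gorenstein ring this means that `𝒳` consists of maximal Cohen–Macaulay
modules.
-/

section ExtVanishing

open Abelian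

variable {R : Type u} [CommRing R] {A B C M N W : ModuleCat.{u} R} {i : ℕ}

theorem preservesFiniteLimits_linearYoneda_obj (R : Type u) [CommRing R] {C : Type*}
    [Category.{u} C] [Preadditive C] [Linear R C] (Y : C) :
    Limits.PreservesFiniteLimits ((linearYoneda R C).obj Y) :=
  have : Limits.PreservesFiniteLimits ((linearYoneda R C).obj Y ⋙ forget (ModuleCat.{u} R)) :=
    inferInstanceAs (Limits.PreservesFiniteLimits (yoneda.obj Y))
  Limits.preservesFiniteLimits_of_reflects_of_preserves _ (forget (ModuleCat.{u} R))

theorem extVanish_zero_iff_subsingleton_linearMap :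
    ExtVanish R 0 M N ↔ Subsingleton (M →ₗ[R] N) :=
  have := preservesFiniteLimits_linearYoneda_obj R N
  have := Limits.preservesFiniteColimits_rightOp ((linearYoneda R (ModuleCat.{u} R)).obj N)
  let e : ExtMod R 0 M N ≅ ModuleCat.of R (M ⟶ N) :=
    (((linearYoneda R (ModuleCat.{u} R)).obj N).rightOp.leftDerivedZeroIsoSelf.app M).unop.symm
  (e.toLinearEquiv.toEquiv.trans ModuleCat.homEquiv).subsingleton_congr

theorem extVanish_succ_iff_subsingleton_ext :
    ExtVanish R (i + 1) M N ↔ Subsingleton (Ext.{u} M N (i + 1)) := by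
  let P := projectiveResolution M
  have cocycle_iff : ExtVanish R (i + 1) M N ↔ ∀ x : P.complex.X (i + 1) ⟶ N,
      P.complex.d (i + 2) (i + 1) ≫ x = 0 →
        ∃ y : P.complex.X i ⟶ N, P.complex.d (i + 1) i ≫ y = x := by
    rw [ExtVanish, ← ModuleCat.isZero_iff_subsingleton, (P.isoExt (i + 1) N).isZero_iff,
      ← HomologicalComplex.exactAt_iff_isZero_homology,
      HomologicalComplex.exactAt_iff' _ i (i + 1) (i + 2) (by simp) (by simp),
      ShortComplex.moduleCat_exact_iff]
    rfl
  rw [cocycle_iff, subsingleton_iff_forall_eq 0]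
  constructor
  · intro h α
    obtain ⟨x, hx, rfl⟩ := P.extMk_surjective α (i + 2) rfl
    exact (P.extMk_eq_zero_iff x (i + 2) rfl hx i rfl).2 (h x hx)
  · intro h x hx
    exact (P.extMk_eq_zero_iff x (i + 2) rfl hx i rfl).1 (h _)

theorem extVanish_iff_subsingleton_ext : ExtVanish R i M N ↔ Subsingleton (Ext.{u} M N i) := by
  cases i with
  | zero =>
    exact extVanish_zero_iff_subsingleton_linearMap.trans
      (Ext.homEquiv₀.trans ModuleCat.homEquiv).subsingleton_congr.symm
  | succ i => exact extVanish_succ_iff_subsingleton_ext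

theorem extVanish_iff_forall_eq_zero : ExtVanish R i M N ↔ ∀ x : Ext.{u} M N i, x = 0 :=
  extVanish_iff_subsingleton_ext.trans (subsingleton_iff_forall_eq 0)

theorem ExtVanish.eq_zero (h : ExtVanish R i M N) (x : Ext.{u} M N i) : x = 0 :=
  extVanish_iff_forall_eq_zero.1 h x

theorem extVanish_succ_of_projective [Module.Projective R M] : ExtVanish R (i + 1) M N :=
  have : Projective M := (IsProjective.iff_projective M).1 inferInstance
  extVanish_iff_forall_eq_zero.2 Ext.eq_zero_of_projective

theorem extVanish_of_subsingleton_left [Subsingleton M] : ExtVanish R i M N := by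
  cases i with
  | zero => exact extVanish_zero_iff_subsingleton_linearMap.2 inferInstance
  | succ i => exact extVanish_succ_of_projective

theorem ExtVanish.congr_left (h : ExtVanish R i M W) (e : M ≃ₗ[R] N) : ExtVanish R i N W :=
  have : Subsingleton (ExtMod R i M W) := h
  (((_root_.Ext R (ModuleCat.{u} R) i).mapIso e.toModuleIso.op).app
    W).toLinearEquiv.toEquiv.subsingleton

theorem ExtVanish.retract_right (h : ExtVanish R i W M) (s : N →ₗ[R] M) (r : M →ₗ[R] N)
    (hrs : r ∘ₗ s = LinearMap.id) : ExtVanish R i W N := by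
  refine extVanish_iff_forall_eq_zero.2 fun x ↦ ?_
  calc x = x.comp (Ext.mk₀ (ModuleCat.ofHom s ≫ ModuleCat.ofHom r)) (add_zero i) := by
        rw [← ModuleCat.ofHom_comp, hrs]
        exact (Ext.comp_mk₀_id x).symm
    _ = 0 := by
        rw [← Ext.mk₀_comp_mk₀, ← Ext.comp_assoc_of_second_deg_zero, h.eq_zero (x.comp _ _),
          Ext.zero_comp]

namespace IsSES

variable {f : A →ₗ[R] B} {g : B →ₗ[R] C}

theorem comp_eq_zero (h : IsSES R f g) : g ∘ₗ f = 0 :=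
  h.2.1.linearMap_comp_eq_zero

theorem shortExact (h : IsSES R f g) :
    (ModuleCat.shortComplexOfCompEqZero f g h.comp_eq_zero).ShortExact :=
  ModuleCat.shortComplex_shortExact _ h.2.1 h.1 h.2.2

theorem extVanish_to_middle (h : IsSES R f g) (hA : ExtVanish R i W A) (hC : ExtVanish R i W C) :
    ExtVanish R i W B := by
  refine extVanish_iff_forall_eq_zero.2 fun x ↦ ?_
  obtain ⟨y, rfl⟩ := Ext.covariant_sequence_exact₂ (X := W) h.shortExact x (hC.eq_zero _)
  rw [hA.eq_zero y, Ext.zero_comp]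

theorem extVanish_to_quotient (h : IsSES R f g) (hB : ExtVanish R i W B)
    (hA : ExtVanish R (i + 1) W A) : ExtVanish R i W C := by
  refine extVanish_iff_forall_eq_zero.2 fun x ↦ ?_
  obtain ⟨y, rfl⟩ := Ext.covariant_sequence_exact₃ (X := W) h.shortExact x rfl (hA.eq_zero _)
  rw [hB.eq_zero y, Ext.zero_comp]

theorem extVanish_from_middle (h : IsSES R f g) (hA : ExtVanish R i A N)
    (hC : ExtVanish R i C N) : ExtVanish R i B N := by
  refine extVanish_iff_forall_eq_zero.2 fun x ↦ ?_
  obtain ⟨y, rfl⟩ := Ext.contravariant_sequence_exact₂ h.shortExact (Y := N) x (hA.eq_zero _)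
  rw [hC.eq_zero y, Ext.comp_zero]

theorem extVanish_from_quotient (h : IsSES R f g) (hB : ExtVanish R (i + 1) B N)
    (hA : ExtVanish R i A N) : ExtVanish R (i + 1) C N := by
  refine extVanish_iff_forall_eq_zero.2 fun x ↦ ?_
  obtain ⟨y, rfl⟩ := Ext.contravariant_sequence_exact₃ h.shortExact (Y := N) x (hB.eq_zero _)
    (add_comm _ _)
  rw [hA.eq_zero y, Ext.comp_zero]

theorem extVanish_from_sub (h : IsSES R f g) (hB : ExtVanish R i B N)
    (hC : ExtVanish R (i + 1) C N) : ExtVanish R i A N := by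
  refine extVanish_iff_forall_eq_zero.2 fun x ↦ ?_
  obtain ⟨y, rfl⟩ := Ext.contravariant_sequence_exact₁ h.shortExact (Y := N) x
    (add_comm 1 i) (hC.eq_zero _)
  rw [hB.eq_zero y, Ext.comp_zero]

theorem exists_extension (h : IsSES R f g) (hC : ExtVanish R 1 C N) (φ : A →ₗ[R] N) :
    ∃ ψ : B →ₗ[R] N, ψ ∘ₗ f = φ := by
  obtain ⟨y, hy⟩ := Ext.contravariant_sequence_exact₁ h.shortExact (Y := N)
    (Ext.mk₀ (ModuleCat.ofHom φ)) rfl (hC.eq_zero _)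
  obtain ⟨ψ, rfl⟩ := (Ext.mk₀_bijective _ _).2 y
  rw [Ext.mk₀_comp_mk₀] at hy
  exact ⟨ψ.hom, congrArg ModuleCat.Hom.hom ((Ext.mk₀_bijective _ _).1 hy)⟩

theorem exists_lift (h : IsSES R f g) (hA : ExtVanish R 1 W A) (φ : W →ₗ[R] C) :
    ∃ ψ : W →ₗ[R] B, g ∘ₗ ψ = φ := by
  obtain ⟨y, hy⟩ := Ext.covariant_sequence_exact₃ (X := W) h.shortExact
    (Ext.mk₀ (ModuleCat.ofHom φ)) rfl (hA.eq_zero _)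
  obtain ⟨ψ, rfl⟩ := (Ext.mk₀_bijective _ _).2 y
  rw [Ext.mk₀_comp_mk₀] at hy
  exact ⟨ψ.hom, congrArg ModuleCat.Hom.hom ((Ext.mk₀_bijective _ _).1 hy)⟩

theorem exact_linearMap_comp (h : IsSES R f g) (W : ModuleCat.{u} R) :
    Function.Exact (fun ψ : W →ₗ[R] A ↦ f ∘ₗ ψ) (fun φ : W →ₗ[R] B ↦ g ∘ₗ φ) := by
  refine fun φ ↦ ⟨fun hφ ↦ ?_, ?_⟩
  · have range_le (w : W) : φ w ∈ LinearMap.range f := (h.2.1 (φ w)).1 (LinearMap.congr_fun hφ w)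
    refine ⟨(LinearEquiv.ofInjective f h.1).symm ∘ₗ φ.codRestrict _ range_le, ?_⟩
    ext w
    exact LinearEquiv.ofInjective_symm_apply f (h := h.1) ⟨φ w, range_le w⟩
  · rintro ⟨ψ, rfl⟩
    exact (LinearMap.comp_assoc ..).symm.trans <| by rw [h.comp_eq_zero, LinearMap.zero_comp]

theorem extVanish_one_of_exists_extension (h : IsSES R f g) (hB : ExtVanish R 1 B N)
    (hext : ∀ φ : A →ₗ[R] N, ∃ ψ : B →ₗ[R] N, ψ ∘ₗ f = φ) : ExtVanish R 1 C N := by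
  refine extVanish_iff_forall_eq_zero.2 fun x ↦ ?_
  obtain ⟨y, rfl⟩ := Ext.contravariant_sequence_exact₃ h.shortExact (Y := N) x (hB.eq_zero _)
    (add_zero 1)
  obtain ⟨φ, rfl⟩ := (Ext.mk₀_bijective _ _).2 y
  obtain ⟨ψ, hψ⟩ := hext φ.hom
  have factors : φ = ModuleCat.ofHom f ≫ ModuleCat.ofHom ψ := by
    rw [← ModuleCat.ofHom_comp, hψ, ModuleCat.ofHom_hom]
  rw [factors, ← Ext.mk₀_comp_mk₀]
  exact h.shortExact.extClass_comp_assoc _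

end IsSES

theorem isSES_ker {g : B →ₗ[R] C} (hg : Function.Surjective g) :
    IsSES R (A := .of R (LinearMap.ker g)) (LinearMap.ker g).subtype g :=
  ⟨Subtype.val_injective, g.exact_subtype_ker_map, hg⟩

theorem isSES_inl_snd (M N : ModuleCat.{u} R) :
    IsSES R (B := .of R (M × N)) (LinearMap.inl R M N) (LinearMap.snd R M N) :=
  ⟨LinearMap.inl_injective, .inl_snd, LinearMap.snd_surjective⟩

theorem exists_free_cover (W : ModuleCat.{u} R) [Module.Finite R W] :
    ∃ (F : ModuleCat.{u} R) (p : F →ₗ[R] W),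
      Module.Finite R F ∧ Module.Free R F ∧ Function.Surjective p := by
  obtain ⟨n, p, hp⟩ := Module.Finite.exists_fin' R W
  let e : (ULift.{u} (Fin n) → R) ≃ₗ[R] (Fin n → R) := .funCongrLeft R R Equiv.ulift.symm
  exact ⟨.of R (ULift.{u} (Fin n) → R), p ∘ₗ e.toLinearMap,
    inferInstanceAs (Module.Finite R (_ → R)), inferInstanceAs (Module.Free R (_ → R)),
    hp.comp e.surjective⟩

end ExtVanishing

section RegularElements

open Abelian
open scoped Pointwise

variable {R : Type u} [CommRing R] {M N W : ModuleCat.{u} R} {x : R} {i : ℕ}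

theorem isSES_lsmul_mkQ (hx : IsSMulRegular M x) :
    IsSES R (C := .of R (QuotSMulTop x M)) (LinearMap.lsmul R M x)
      (x • (⊤ : Submodule R M)).mkQ :=
  ⟨hx, LinearMap.exact_lsmul_mkQ_smul_top M x, Submodule.mkQ_surjective _⟩

theorem ext_smul_eq_zero_of_mem_annihilator (hx : x ∈ Module.annihilator R W)
    (y : Ext.{u} W M i) : x • y = 0 := by
  have smul_id : x • 𝟙 W = 0 := by
    rw [← ModuleCat.lsmul_eq_smul_id, Module.mem_annihilator_iff_lsmul_eq_zero.1 hx]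
    rfl
  calc x • y = (Ext.mk₀ (x • 𝟙 W)).comp y (zero_add _) := by simp [Ext.mk₀_smul]
    _ = 0 := by rw [smul_id, Ext.mk₀_zero, Ext.zero_comp]

theorem extVanish_succ_of_quotSMulTop_right (hM : IsSMulRegular M x)
    (hW : x ∈ Module.annihilator R W) (h : ExtVanish R i W (.of R (QuotSMulTop x M))) :
    ExtVanish R (i + 1) W M := by
  refine extVanish_iff_forall_eq_zero.2 fun y ↦ ?_
  obtain ⟨z, rfl⟩ := Ext.covariant_sequence_exact₁ W (isSES_lsmul_mkQ hM).shortExact y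
    ((Ext.smul_eq_comp_mk₀ y x).symm.trans (ext_smul_eq_zero_of_mem_annihilator hW y)) rfl
  rw [h.eq_zero z, Ext.zero_comp]

-- `Ext^i(M, N)` is a finite module which equals `x Ext^i(M, N)`, so Nakayama applies.
theorem extVanish_of_quotSMulTop_left [IsNoetherianRing R] [IsLocalRing R] [Module.Finite R M]
    [Module.Finite R N] (hM : IsSMulRegular M x) (hx : x ∈ maximalIdeal R)
    (h : ExtVanish R (i + 1) (.of R (QuotSMulTop x M)) N) : ExtVanish R i M N := by
  have exists_smul_eq (y : Ext.{u} M N i) : ∃ z, x • z = y := by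
    obtain ⟨z, rfl⟩ := Ext.contravariant_sequence_exact₁ (isSES_lsmul_mkQ hM).shortExact N y
      (add_comm 1 i) (h.eq_zero _)
    refine ⟨z, ?_⟩
    change _ = (Ext.mk₀ (x • 𝟙 M)).comp z (zero_add i)
    simp only [Ext.mk₀_smul, Ext.smul_comp, Ext.mk₀_id_comp]
  have top_eq_bot : (⊤ : Submodule R (Ext.{u} M N i)) = ⊥ := by
    refine Submodule.eq_bot_of_le_smul_of_le_jacobson_bot (maximalIdeal R) _
      Module.Finite.fg_top (fun y _ ↦ ?_) (maximalIdeal_le_jacobson _)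
    obtain ⟨z, rfl⟩ := exists_smul_eq y
    exact Submodule.smul_mem_smul hx trivial
  exact extVanish_iff_subsingleton_ext.2 <|
    (Submodule.subsingleton_iff R).1 (subsingleton_of_bot_eq_top top_eq_bot.symm)

theorem isSMulRegular_quotient_of_notMem {p : Ideal R} [p.IsPrime] (hx : x ∉ p) :
    IsSMulRegular (R ⧸ p) x :=
  (isSMulRegular_quotient_iff_mem_of_smul_mem p x).2 fun _ h ↦
    (Ideal.IsPrime.mem_or_mem ‹_› h).resolve_left hx

section ResidueField

variable [IsLocalRing R]

theorem annihilator_residueField : Module.annihilator R (ResidueField R) = maximalIdeal R :=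
  Ideal.annihilator_quotient

theorem isSimpleModule_residueField : IsSimpleModule R (ResidueField R) :=
  isSimpleModule_iff_quot_maximal.2
    ⟨maximalIdeal R, inferInstance, ⟨LinearEquiv.refl R (R ⧸ maximalIdeal R)⟩⟩

theorem exists_isSMulRegular_of_extVanish_zero [IsNoetherianRing R] [Module.Finite R M]
    (h : ExtVanish R 0 (.of R (ResidueField R)) M) :
    ∃ x ∈ maximalIdeal R, IsSMulRegular M x := by
  rwa [extVanish_zero_iff_subsingleton_linearMap, IsSMulRegular.subsingleton_linearMap_iff,
    annihilator_residueField] at h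

end ResidueField

end RegularElements

section InjectiveDimension

variable {R : Type u} [CommRing R] [IsLocalRing R] {M N : ModuleCat.{u} R} {i n : ℕ}

/-- The injective dimension of the finitely generated module `N` is exactly `n`. Only finitely
generated modules are tested in the first argument of `Ext`, and the nonvanishing in degree `n` is
required at the residue field. -/
structure InjDimEq (N : ModuleCat.{u} R) (n : ℕ) : Prop where
  extVanish : ∀ {M : ModuleCat.{u} R} [Module.Finite R M] {i : ℕ}, n < i → ExtVanish R i M N
  not_extVanish_residueField : ¬ ExtVanish R n (.of R (ResidueField R)) N

theorem InjDimEq.extVanish_zero_residueField (hN : InjDimEq N n) [Module.Finite R M]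
    (h : ExtVanish R n M N) : ExtVanish R 0 (.of R (ResidueField R)) M := by
  rw [extVanish_zero_iff_subsingleton_linearMap, subsingleton_iff_forall_eq 0]
  by_contra! ⟨φ, hφ⟩
  have := isSimpleModule_residueField (R := R)
  have hses : IsSES R (C := .of R (M ⧸ LinearMap.range φ)) φ (LinearMap.range φ).mkQ :=
    ⟨φ.injective_or_eq_zero.resolve_right hφ, φ.exact_map_mkQ_range, Submodule.mkQ_surjective _⟩
  exact hN.not_extVanish_residueField
    (hses.extVanish_from_sub h (hN.extVanish (Nat.lt_succ_self n)))

variable [IsNoetherianRing R]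

theorem extVanish_quotient_prime {p : Ideal R} [p.IsPrime] (hp : p ≠ maximalIdeal R)
    [Module.Finite R N] (h : ∀ M : ModuleCat.{u} R, Module.Finite R M → ExtVanish R (i + 1) M N) :
    ExtVanish R i (.of R (R ⧸ p)) N := by
  obtain ⟨x, hx, hxp⟩ :=
    SetLike.exists_of_lt ((le_maximalIdeal (Ideal.IsPrime.ne_top ‹_›)).lt_of_ne hp)
  exact extVanish_of_quotSMulTop_left (M := .of R (R ⧸ p))
    (isSMulRegular_quotient_of_notMem hxp) hx (h _ inferInstance)

theorem extVanish_of_residueField [Module.Finite R N]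
    (h : ∀ M : ModuleCat.{u} R, Module.Finite R M → ExtVanish R (i + 1) M N)
    (hk : ExtVanish R i (.of R (ResidueField R)) N) (M : ModuleCat.{u} R) [hM : Module.Finite R M] :
    ExtVanish R i M N := by
  refine IsNoetherianRing.induction_on_isQuotientEquivQuotientPrime R (M := M) hM
    (motive := fun L _ _ _ ↦ ExtVanish R i (.of R L) N) ?_ ?_ ?_
  · intro L _ _ _ _
    exact extVanish_of_subsingleton_left
  · intro L _ _ _ p e
    refine ExtVanish.congr_left (M := .of R (R ⧸ p.1)) ?_ e.symm
    by_cases hp : p.1 = maximalIdeal R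
    · rw [hp]
      exact hk
    · exact extVanish_quotient_prime hp h
  · intro L₁ _ _ _ L₂ _ _ _ L₃ _ _ _ f g hf hg hfg h₁ h₃
    exact IsSES.extVanish_from_middle (A := .of R L₁) (B := .of R L₂) (C := .of R L₃)
      ⟨hf, hfg, hg⟩ h₁ h₃

theorem exists_injDimEq [Module.Finite R N] [Nontrivial N]
    (h : ∃ n : ℕ, ∀ M : ModuleCat.{u} R, Module.Finite R M → ∀ i, n < i → ExtVanish R i M N) :
    ∃ n, InjDimEq N n := by
  classical
  have spec := Nat.find_spec h
  refine ⟨Nat.find h, fun {M} _ i hi ↦ spec M ‹_› i hi, fun hk ↦ ?_⟩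
  have vanish (M : ModuleCat.{u} R) [Module.Finite R M] : ExtVanish R (Nat.find h) M N :=
    extVanish_of_residueField (fun M hM ↦ spec M hM _ (Nat.lt_succ_self _)) hk M
  rcases find_eq : Nat.find h with _ | m
  · rw [find_eq] at vanish
    have := extVanish_zero_iff_subsingleton_linearMap.1 (vanish N)
    obtain ⟨y, hy⟩ := exists_ne (0 : N)
    exact hy (LinearMap.congr_fun (Subsingleton.elim (LinearMap.id : N →ₗ[R] N) 0) y)
  · refine Nat.find_min h (m := m) (by lia) fun M _ i hi ↦ ?_
    obtain rfl | hlt := (Nat.succ_le_of_lt hi).eq_or_lt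
    · rw [Nat.succ_eq_add_one, ← find_eq]
      exact vanish M
    · exact spec M ‹_› i (by lia)

namespace InjDimEq

theorem extVanish_residueField_of_add_lt (hN : InjDimEq N n) {s j : ℕ} (hsj : s + j < n)
    {M : ModuleCat.{u} R} [Module.Finite R M] (h : ∀ i, s < i → ExtVanish R i M N) :
    ExtVanish R j (.of R (ResidueField R)) M := by
  induction j generalizing s M with
  | zero => exact hN.extVanish_zero_residueField (h n (by lia))
  | succ j ih =>
    obtain ⟨x, hx, hreg⟩ :=
      exists_isSMulRegular_of_extVanish_zero (hN.extVanish_zero_residueField (h n (by lia)))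
    refine extVanish_succ_of_quotSMulTop_right hreg (annihilator_residueField.ge hx)
      (ih (s := s + 1) (by lia) fun i hi ↦ ?_)
    obtain ⟨i, rfl⟩ := Nat.exists_eq_succ_of_ne_zero (Nat.ne_zero_of_lt hi)
    exact (isSES_lsmul_mkQ hreg).extVanish_from_quotient (h _ (by lia)) (h _ (by lia))

theorem extVanish_of_lt_add (hN : InjDimEq N n) [Module.Finite R N] {s : ℕ} (hi : n < i + s)
    {M : ModuleCat.{u} R} [Module.Finite R M]
    (h : ∀ j < s, ExtVanish R j (.of R (ResidueField R)) M) : ExtVanish R i M N := by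
  induction s generalizing i M with
  | zero => exact hN.extVanish hi
  | succ s ih =>
    obtain ⟨x, hx, hreg⟩ := exists_isSMulRegular_of_extVanish_zero (h 0 s.succ_pos)
    refine extVanish_of_quotSMulTop_left hreg hx (ih (by lia) fun j hj ↦ ?_)
    exact (isSES_lsmul_mkQ hreg).extVanish_to_quotient (h j (by lia)) (h (j + 1) (by lia))

theorem extVanish_residueField_of_lt (hR : InjDimEq (.of R R) n) {j : ℕ} (hj : j < n) :
    ExtVanish R j (.of R (ResidueField R)) (.of R R) := by
  refine hR.extVanish_residueField_of_add_lt (s := 0) (by lia) fun i hi ↦ ?_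
  obtain ⟨i, rfl⟩ := Nat.exists_eq_succ_of_ne_zero hi.ne'
  exact extVanish_succ_of_projective

end InjDimEq

end InjectiveDimension

section Dimension

open RingTheory.Sequence

variable {R : Type u} [CommRing R]

section Local

variable [IsLocalRing R]

theorem ringKrullDim_quotient_eq_zero_of_forall_eq_maximalIdeal {I : Ideal R}
    (hI : I ≤ maximalIdeal R) (h : ∀ p : Ideal R, p.IsPrime → I ≤ p → p = maximalIdeal R) :
    ringKrullDim (R ⧸ I) = 0 := by
  let closedPt : PrimeSpectrum.zeroLocus (I : Set R) := ⟨closedPoint R, hI⟩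
  have : Unique (PrimeSpectrum.zeroLocus (I : Set R)) :=
    ⟨⟨closedPt⟩, fun p ↦ Subtype.ext (PrimeSpectrum.ext (h p.1.asIdeal p.1.isPrime p.2))⟩
  rw [ringKrullDim_quotient, Order.krullDim_eq_zero_of_unique]

theorem isMCM_iff_forall_extVanish_residueField {n : ℕ} (hdim : ringKrullDim R = n)
    (M : ModuleCat.{u} R) :
    IsMCM R M ↔ ∀ j < n, ExtVanish R j (.of R (ResidueField R)) M := by
  have hcoe : ((n : ℕ) : WithBot ℕ∞) = ((n : ℕ∞) : WithBot ℕ∞) := rfl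
  rw [IsMCM, hdim, hcoe, WithBot.coe_le_coe, moduleDepth, le_sInf_iff, Set.forall_mem_image]
  refine forall_congr' fun j ↦ ?_
  rw [Set.mem_ofPred_eq, Nat.cast_le, not_imp_comm, not_le]

end Local

variable [IsNoetherianRing R]

theorem extVanish_of_isRegular {M N : ModuleCat.{u} R} [Module.Finite R M] [Module.Finite R N]
    {rs : List R} (hrs : IsRegular M rs) (hN : Ideal.ofList rs ≤ Module.annihilator R N) {j : ℕ}
    (hj : j < rs.length) : ExtVanish R j N M := by
  cases subsingleton_or_nontrivial N with
  | inl _ => exact extVanish_of_subsingleton_left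
  | inr hnontrivial =>
    have vanish_iff := (ModuleCat.exists_isRegular_tfae (Ideal.ofList rs) rs.length M
      hrs.top_ne_smul.symm.lt_top).out 0 3
    refine extVanish_iff_subsingleton_ext.2 <|
      vanish_iff.2 ⟨rs, rfl, fun r hr ↦ Ideal.subset_span hr, hrs⟩ N hnontrivial ‹_› ?_ j hj
    rw [Module.support_eq_zeroLocus]
    exact PrimeSpectrum.zeroLocus_anti_mono hN

variable [IsLocalRing R]

theorem exists_isRegular_of_extVanish {M : ModuleCat.{u} R} [Module.Finite R M] [Nontrivial M]
    {n : ℕ} (h : ∀ j < n, ExtVanish R j (.of R (ResidueField R)) M) :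
    ∃ rs : List R, rs.length = n ∧ (∀ r ∈ rs, r ∈ maximalIdeal R) ∧ IsRegular M rs := by
  have smul_lt_top : maximalIdeal R • (⊤ : Submodule R M) < ⊤ :=
    (Submodule.top_ne_ideal_smul_of_le_jacobson_annihilator
      ((maximalIdeal_le_jacobson _))).symm.lt_top
  have exists_iff := (ModuleCat.exists_isRegular_tfae (maximalIdeal R) n M smul_lt_top).out 2 3
  refine exists_iff.1 ⟨.of R (ResidueField R), inferInstanceAs (Nontrivial (ResidueField R)),
    inferInstance, ?_, fun j hj ↦ extVanish_iff_subsingleton_ext.1 (h j hj)⟩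
  rw [Module.support_eq_zeroLocus]
  exact congrArg (fun I : Ideal R ↦ PrimeSpectrum.zeroLocus (I : Set R)) annihilator_residueField

namespace InjDimEq

variable {n : ℕ}

-- If `p ≠ 𝔪`, then the kernel `K` of `R ⧸ p → k` is killed by `rs`, so `Ext^(n - 1)(K, R) = 0`,
-- and `Ext^n(k, R)` embeds into `Ext^n(R ⧸ p, R) = 0`.
theorem eq_maximalIdeal_of_ofList_le (hR : InjDimEq (.of R R) n) {rs : List R}
    (hrs : IsRegular R rs) (hlen : rs.length = n) {p : Ideal R} [hp : p.IsPrime]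
    (hle : Ideal.ofList rs ≤ p) : p = maximalIdeal R := by
  by_contra hne
  have vanish : ExtVanish R n (.of R (R ⧸ p)) (.of R R) :=
    extVanish_quotient_prime hne fun M _ ↦ hR.extVanish (Nat.lt_succ_self n)
  let π : (R ⧸ p) →ₗ[R] ResidueField R := Submodule.factor (le_maximalIdeal hp.ne_top)
  have hπ : Function.Surjective π := Submodule.factor_surjective _
  have annihilates : Ideal.ofList rs ≤ Module.annihilator R (LinearMap.ker π) :=
    hle.trans <| (Ideal.annihilator_quotient (I := p)).ge.trans <|
      (LinearMap.ker π).subtype.annihilator_le_of_injective Subtype.val_injective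
  refine hR.not_extVanish_residueField ?_
  cases n with
  | zero =>
    rw [extVanish_zero_iff_subsingleton_linearMap] at vanish ⊢
    exact ⟨fun φ ψ ↦ (LinearMap.cancel_right (g := π) hπ).1 (Subsingleton.elim _ _)⟩
  | succ m =>
    exact (isSES_ker (B := .of R (R ⧸ p)) hπ).extVanish_from_quotient vanish
      (extVanish_of_isRegular (N := .of R (LinearMap.ker π)) hrs annihilates (by lia))

theorem ringKrullDim_eq (hR : InjDimEq (.of R R) n) : ringKrullDim R = n := by
  obtain ⟨rs, hlen, hmem, hreg⟩ := exists_isRegular_of_extVanish (M := .of R R)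
    fun j hj ↦ hR.extVanish_residueField_of_lt hj
  have quotient_dim : ringKrullDim (R ⧸ Ideal.ofList rs) = 0 :=
    ringKrullDim_quotient_eq_zero_of_forall_eq_maximalIdeal (Ideal.span_le.2 hmem)
      fun p _ hle ↦ hR.eq_maximalIdeal_of_ofList_le hreg hlen hle
  rw [← ringKrullDim_add_length_eq_ringKrullDim_of_isRegular rs hreg, quotient_dim, hlen,
    zero_add]

end InjDimEq

theorem InjDimEq.isMCM_iff {n : ℕ} (hR : InjDimEq (.of R R) n) (M : ModuleCat.{u} R)
    [Module.Finite R M] : IsMCM R M ↔ ∀ i, 0 < i → ExtVanish R i M (.of R R) := by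
  rw [isMCM_iff_forall_extVanish_residueField hR.ringKrullDim_eq]
  constructor
  · intro h i hi
    exact hR.extVanish_of_lt_add (s := n) (by lia) h
  · intro h j hj
    exact hR.extVanish_residueField_of_add_lt (s := 0) (by lia) h

end Dimension

section CyclicQuotient

open scoped Pointwise

variable {R : Type u} [CommRing R] {𝒳 : Set (ModuleCat.{u} R)} {x : R}

theorem IsResolving.self_mem (h𝒳 : IsResolving R 𝒳) : ModuleCat.of R R ∈ 𝒳 :=
  h𝒳.freeMem _ (inferInstanceAs (Module.Finite R R)) (inferInstanceAs (Module.Free R R))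

theorem IsSES.memCC {A B C : ModuleCat.{u} R} {f : A →ₗ[R] B} {g : B →ₗ[R] C} (h : IsSES R f g)
    (hA : A ∈ 𝒳) (hB : B ∈ 𝒳) (hext : ∀ W ∈ 𝒳, ExtVanish R 1 W A) : MemCC R 𝒳 C :=
  ⟨B, A, f, g, hB, hA, fun W hW ↦ ⟨h.exists_lift (hext W hW), h.exact_linearMap_comp W⟩⟩

theorem isUnit_of_extVanish_one_quotSMulTop (hx : IsSMulRegular R x)
    (h : ExtVanish R 1 (.of R (QuotSMulTop x R)) (.of R R)) : IsUnit x := by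
  obtain ⟨ψ, hψ⟩ := (isSES_lsmul_mkQ (M := .of R R) hx).exists_extension h LinearMap.id
  refine isUnit_iff_dvd_one.2 ⟨ψ 1, ?_⟩
  calc (1 : R) = ψ (x • 1) := (LinearMap.congr_fun hψ 1).symm
    _ = x * ψ 1 := ψ.map_smul x 1

theorem InjDimEq.exists_memCC_notMem [IsNoetherianRing R] [IsLocalRing R] {n : ℕ}
    (hR : InjDimEq (.of R R) n) (hn : 0 < n) (h𝒳 : IsResolving R 𝒳) (hMCM : ∀ M ∈ 𝒳, IsMCM R M) :
    ∃ C : ModuleCat.{u} R, Module.Finite R C ∧ MemCC R 𝒳 C ∧ C ∉ 𝒳 := by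
  have vanish {W : ModuleCat.{u} R} (hW : W ∈ 𝒳) : ExtVanish R 1 W (.of R R) :=
    have := h𝒳.finite W hW
    (hR.isMCM_iff W).1 (hMCM W hW) 1 one_pos
  obtain ⟨x, hx, hreg⟩ :=
    exists_isSMulRegular_of_extVanish_zero (hR.extVanish_residueField_of_lt hn)
  refine ⟨.of R (QuotSMulTop x R), inferInstance,
    (isSES_lsmul_mkQ hreg).memCC h𝒳.self_mem h𝒳.self_mem fun W hW ↦ vanish hW, fun hmem ↦ ?_⟩
  exact (mem_maximalIdeal x).1 hx (isUnit_of_extVanish_one_quotSMulTop hreg (vanish hmem))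

end CyclicQuotient

section Hensel

open Polynomial

variable {R : Type u} [CommRing R] [HenselianLocalRing R]

theorem exists_hasMap_residue_eq (P : StandardEtalePair R) {b : ResidueField R}
    (hb : P.HasMap b) : ∃ a : R, residue R a = b ∧ P.HasMap a := by
  have residue_eval (q : R[X]) (r : R) : residue R (q.eval r) = aeval (residue R r) q :=
    (aeval_algebraMap_apply_eq_algebraMap_eval r q).symm
  obtain ⟨a₀, rfl⟩ := residue_surjective b
  obtain ⟨a, hroot, hsub⟩ := HenselianLocalRing.is_henselian P.f P.monic_f a₀
    (by rw [← residue_eq_zero_iff, residue_eval, hb.1])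
    (by rw [← residue_ne_zero_iff_isUnit, residue_eval]; exact hb.isUnit_derivative_f.ne_zero)
  have hres : residue R a = residue R a₀ := by
    rwa [← sub_eq_zero, ← map_sub, residue_eq_zero_iff]
  refine ⟨a, hres, by rwa [coe_aeval_eq_eval], ?_⟩
  rw [coe_aeval_eq_eval, ← residue_ne_zero_iff_isUnit, residue_eval, hres]
  exact hb.2.ne_zero

variable {S : Type*} [CommRing S] [Algebra R S]

theorem exists_algHom_comp_eq_of_isStandardEtale [Algebra.IsStandardEtale R S]
    (φ : S →ₐ[R] ResidueField R) :
    ∃ ψ : S →ₐ[R] R, (Algebra.ofId R (ResidueField R)).comp ψ = φ := by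
  obtain ⟨P⟩ := Algebra.IsStandardEtale.nonempty_standardEtalePresentation (R := R) (S := S)
  obtain ⟨a, hres, ha⟩ := exists_hasMap_residue_eq P.P (P.hasMap.map φ)
  let ψ : S →ₐ[R] R := (P.lift a ha).comp P.equivRing.toAlgHom
  have hψ : ψ P.x = a := (congrArg (P.lift a ha) P.equivRing_x).trans (P.lift_X a ha)
  refine ⟨ψ, P.hom_ext ?_⟩
  rw [AlgHom.comp_apply, hψ, ← hres]
  rfl

theorem exists_algHom_comp_eq_of_etale [Algebra.Etale R S] (φ : S →ₐ[R] ResidueField R) :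
    ∃ ψ : S →ₐ[R] R, (Algebra.ofId R (ResidueField R)).comp ψ = φ := by
  have : (RingHom.ker φ).IsPrime := RingHom.ker_isPrime φ
  obtain ⟨f, hf, _⟩ := Algebra.IsEtaleAt.exists_isStandardEtale (R := R) (RingHom.ker φ)
  have isUnit_f : IsUnit (φ f) := isUnit_iff_ne_zero.2 hf
  let φ' : Localization.Away f →ₐ[R] ResidueField R :=
    IsLocalization.Away.liftAlgHom f (f := φ) isUnit_f
  have hφ' : φ'.comp (IsScalarTower.toAlgHom R S _) = φ := by
    ext s
    simp only [φ', AlgHom.comp_apply, IsScalarTower.coe_toAlgHom',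
      IsLocalization.Away.liftAlgHom_apply, IsLocalization.Away.lift_eq]
    rfl
  obtain ⟨ψ, hψ⟩ := exists_algHom_comp_eq_of_isStandardEtale φ'
  exact ⟨ψ.comp (IsScalarTower.toAlgHom R S _), by rw [← AlgHom.comp_assoc, hψ, hφ']⟩

theorem exists_isCoprime_mul_eq_of_map_residue_eq_mul {p : R[X]} (hp : p.Monic)
    {f₀ g₀ : (ResidueField R)[X]} (hf₀ : f₀.Monic) (hg₀ : g₀.Monic) (hcop : IsCoprime f₀ g₀)
    (hmul : p.map (residue R) = f₀ * g₀) :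
    ∃ f g : R[X], p = f * g ∧ IsCoprime f g ∧ f.map (residue R) = f₀ ∧
      g.map (residue R) = g₀ := by
  have hdeg : p.natDegree = f₀.natDegree + g₀.natDegree := by
    rw [← hf₀.natDegree_mul hg₀, ← hmul, hp.natDegree_map]
  let P := MonicDegreeEq.mk p hp rfl
  let F := MonicDegreeEq.mk f₀ hf₀ rfl
  let G := MonicDegreeEq.mk g₀ hg₀ rfl
  let homEquiv (T : Type u) [CommRing T] [Algebra R T] :=
    UniversalCoprimeFactorizationRing.homEquiv T _ _ hdeg P
  let factorization := (homEquiv (ResidueField R)).symm ⟨(F, G), hmul.symm, hcop⟩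
  obtain ⟨ψ, hψ⟩ := exists_algHom_comp_eq_of_etale factorization
  obtain ⟨⟨⟨f, g⟩, hfg, hcop'⟩, hq⟩ : ∃ q, homEquiv R ψ = q := ⟨_, rfl⟩
  have hlift : homEquiv (ResidueField R) ((Algebra.ofId R _).comp ψ) =
      ⟨(F, G), hmul.symm, hcop⟩ := by
    rw [hψ]
    exact Equiv.apply_symm_apply _ _
  have fst_eq := UniversalCoprimeFactorizationRing.homEquiv_comp_fst R _ _ hdeg P ψ
    (Algebra.ofId R (ResidueField R))
  have snd_eq := UniversalCoprimeFactorizationRing.homEquiv_comp_snd R _ _ hdeg P ψ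
    (Algebra.ofId R (ResidueField R))
  change (homEquiv _ _).1.1 = (homEquiv R ψ).1.1.map _ at fst_eq
  change (homEquiv _ _).1.2 = (homEquiv R ψ).1.2.map _ at snd_eq
  rw [hlift, hq] at fst_eq snd_eq
  refine ⟨f.1, g.1, ?_, hcop', (congrArg Subtype.val fst_eq).symm,
    (congrArg Subtype.val snd_eq).symm⟩
  rw [hfg]
  exact (map_id (R := R)).symm

end Hensel

section Fitting

open Polynomial

variable {R : Type u} [CommRing R]

theorem isUnit_of_aeval_eq_zero {A : Type*} [Ring A] [Algebra R A] {a : A} {p : R[X]}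
    (hp : aeval a p = 0) (h0 : IsUnit (p.coeff 0)) : IsUnit a := by
  have h : a * aeval a p.divX = -algebraMap R A (p.coeff 0) := by
    rw [← add_eq_zero_iff_eq_neg, ← hp]
    conv_rhs => rw [← X_mul_divX_add p, map_add, map_mul, aeval_X, aeval_C]
  have hcomm : Commute a (aeval a p.divX) := by
    simpa only [aeval_X] using (Commute.all X p.divX).map (aeval a)
  refine (hcomm.isUnit_mul_iff.1 ?_).1
  rw [h]
  exact (h0.map _).neg

theorem comp_aeval_eq_eval_one_smul {V C : Type*} [AddCommGroup V] [Module R V] [AddCommGroup C]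
    [Module R C] {e : Module.End R V} {f : V →ₗ[R] C} (h : f ∘ₗ e = f) (q : R[X]) :
    f ∘ₗ aeval e q = q.eval 1 • f := by
  have comp_pow (n : ℕ) : f ∘ₗ (e ^ n) = f := by
    induction n with
    | zero => rfl
    | succ n ih => rw [pow_succ, Module.End.mul_eq_comp, ← LinearMap.comp_assoc, ih, h]
  induction q using Polynomial.induction_on' with
  | add p q hp hq => rw [map_add, LinearMap.comp_add, hp, hq, eval_add, add_smul]
  | monomial n a =>
    rw [aeval_monomial, ← Algebra.smul_def, LinearMap.comp_smul, comp_pow, eval_monomial,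
      one_pow, mul_one]

variable [HenselianLocalRing R]

-- Lift the factorization `X ^ a * q` with `q.coeff 0 ≠ 0` from the residue field.
theorem exists_isCoprime_aeval_mul_eq_zero {A : Type*} [Ring A] [Algebra R A] {a : A}
    (ha : IsIntegral R a) : ∃ g h : R[X], IsCoprime g h ∧ aeval a (g * h) = 0 ∧
      IsUnit (g.eval 1) ∧ IsUnit (h.coeff 0) := by
  obtain ⟨p, hp, hpa⟩ := ha
  obtain ⟨q, hq, hnd⟩ := exists_eq_pow_rootMultiplicity_mul_and_not_dvd (p.map (residue R))
    (hp.map _).ne_zero 0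
  rw [C_0, sub_zero] at hq hnd
  obtain ⟨g, h, hgh, hcop, hg, hh⟩ := exists_isCoprime_mul_eq_of_map_residue_eq_mul hp
    (monic_X_pow _) ((monic_X_pow _).of_mul_monic_left (hq ▸ hp.map _))
    ((irreducible_X.coprime_iff_not_dvd.2 hnd).pow_left) hq
  refine ⟨g, h, hcop, hgh ▸ hpa, ?_, ?_⟩
  · rw [← residue_ne_zero_iff_isUnit, ← eval_one_map, hg, eval_pow, eval_X, one_pow]
    exact one_ne_zero
  · rwa [← residue_ne_zero_iff_isUnit, ← coeff_map, hh, Ne, ← X_dvd_iff]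

-- Fitting's lemma: `ρ` projects onto `ker h(e)`, where `e` is bijective, along `ker g(e)`.
theorem exists_isIdempotentElem_end {V : Type*} [AddCommGroup V] [Module R V] [Module.Finite R V]
    (e : Module.End R V) : ∃ ρ : Module.End R V, IsIdempotentElem ρ ∧
      (∀ {C : Type u} [AddCommGroup C] [Module R C] (f : V →ₗ[R] C), f ∘ₗ e = f → f ∘ₗ ρ = f) ∧
      (ρ = 1 → Function.Bijective e) := by
  obtain ⟨g, h, ⟨s, t, hst⟩, hgh, hg, hh⟩ :=
    exists_isCoprime_aeval_mul_eq_zero (Algebra.IsIntegral.isIntegral (R := R) e)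
  have aeval_mul_eq_zero (u : R[X]) : aeval e (u * (g * h)) = 0 := by rw [map_mul, hgh, mul_zero]
  refine ⟨aeval e (s * g), ?_, fun f hf ↦ ?_, fun h1 ↦ ?_⟩
  · have : s * g * (s * g) = s * g - s * t * (g * h) := by linear_combination s * g * hst
    rw [IsIdempotentElem, ← map_mul, this, map_sub, aeval_mul_eq_zero, sub_zero]
  · have smul_eq_zero : (g * h).eval 1 • f = 0 := by
      rw [← comp_aeval_eq_eval_one_smul hf, hgh, LinearMap.comp_zero]
    have h_smul : h.eval 1 • f = 0 := by
      rwa [eval_mul, mul_smul, hg.smul_eq_zero] at smul_eq_zero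
    calc f ∘ₗ aeval e (s * g) = (s * g).eval 1 • f := comp_aeval_eq_eval_one_smul hf _
      _ = (s * g + t * h).eval 1 • f := by
        rw [eval_add, add_smul, eval_mul (p := t), mul_smul, h_smul, smul_zero, add_zero]
      _ = f := by rw [hst, eval_one, one_smul]
  · have hh0 : aeval e h = 0 := by
      rw [← one_mul (aeval e h), ← h1, ← map_mul, mul_assoc, aeval_mul_eq_zero]
    exact (Module.End.isUnit_iff e).1 (isUnit_of_aeval_eq_zero hh0 hh)

end Fitting

section MinimalApproximations

variable {R : Type u} [CommRing R]

/-- A linear map `f : M → N` is *right minimal* if every endomorphism of `M` over `N` is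
bijective. -/
def IsRightMinimal {M N : Type*} [AddCommGroup M] [Module R M] [AddCommGroup N] [Module R N]
    (f : M →ₗ[R] N) : Prop :=
  ∀ e : Module.End R M, f ∘ₗ e = f → Function.Bijective e

theorem IsRightMinimal.exists_leftInverse {M M' N : Type*} [AddCommGroup M] [Module R M]
    [AddCommGroup M'] [Module R M'] [AddCommGroup N] [Module R N] {f : M →ₗ[R] N}
    (hmin : IsRightMinimal f) {f' : M' →ₗ[R] N} {s : M →ₗ[R] M'} (hs : f' ∘ₗ s = f)
    {r : M' →ₗ[R] M} (hr : f ∘ₗ r = f') :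
    ∃ r' : M' →ₗ[R] M, f ∘ₗ r' = f' ∧ r' ∘ₗ s = LinearMap.id := by
  have hrs : f ∘ₗ (r ∘ₗ s) = f := by rw [← LinearMap.comp_assoc, hr, hs]
  let E := LinearEquiv.ofBijective (r ∘ₗ s) (hmin _ hrs)
  have hE : f ∘ₗ E.symm.toLinearMap = f := by
    rw [← LinearEquiv.eq_comp_toLinearMap_symm]
    exact hrs.symm
  refine ⟨E.symm.toLinearMap ∘ₗ r, by rw [← LinearMap.comp_assoc, hE, hr], ?_⟩
  ext x
  exact E.symm_apply_apply x

-- Take an idempotent over `N` with maximal kernel.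
theorem exists_isIdempotentElem_isRightMinimal [HenselianLocalRing R] {M : Type*}
    [AddCommGroup M] [Module R M] [IsNoetherian R M] {N : Type u} [AddCommGroup N] [Module R N]
    (f : M →ₗ[R] N) : ∃ π : Module.End R M, IsIdempotentElem π ∧ f ∘ₗ π = f ∧
      IsRightMinimal (f ∘ₗ (LinearMap.range π).subtype) := by
  let idempotentsOver : Set (Module.End R M) := {π | IsIdempotentElem π ∧ f ∘ₗ π = f}
  obtain ⟨_, ⟨π, ⟨hπ, hfπ⟩, rfl⟩, hmax⟩ := set_has_maximal_iff_noetherian.2 ‹IsNoetherian R M›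
    (LinearMap.ker '' idempotentsOver) ⟨_, 1, ⟨IsIdempotentElem.one, rfl⟩, rfl⟩
  refine ⟨π, hπ, hfπ, fun e he ↦ ?_⟩
  set ι := (LinearMap.range π).subtype
  set π' := π.rangeRestrict
  have hπι : π' ∘ₗ ι = LinearMap.id := by
    ext ⟨_, x, rfl⟩
    exact LinearMap.congr_fun hπ x
  obtain ⟨ρ, hρ, hfρ, bijective_of_eq_one⟩ := exists_isIdempotentElem_end e
  let σ : Module.End R M := ι ∘ₗ ρ ∘ₗ π'
  have hσι : σ ∘ₗ ι = ι ∘ₗ ρ := by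
    rw [LinearMap.comp_assoc, LinearMap.comp_assoc, hπι, LinearMap.comp_id]
  have hσ : IsIdempotentElem σ := by
    change σ ∘ₗ ι ∘ₗ ρ ∘ₗ π' = σ
    rw [← LinearMap.comp_assoc, hσι, LinearMap.comp_assoc]
    exact congrArg (fun τ : Module.End R _ ↦ ι ∘ₗ τ ∘ₗ π') hρ
  have hfσ : f ∘ₗ σ = f := by
    rw [← LinearMap.comp_assoc, ← LinearMap.comp_assoc, hfρ _ he]
    exact hfπ
  have ker_le : LinearMap.ker π ≤ LinearMap.ker σ := fun x hx ↦ by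
    have : π' x = 0 := Subtype.ext hx
    rw [LinearMap.mem_ker, LinearMap.comp_apply, LinearMap.comp_apply, this, map_zero, map_zero]
  have ker_eq : LinearMap.ker π = LinearMap.ker σ :=
    eq_of_le_of_not_lt ker_le (hmax _ ⟨σ, ⟨hσ, hfσ⟩, rfl⟩)
  refine bijective_of_eq_one (LinearMap.ext fun v ↦ ?_)
  have mem_ker : ι (v - ρ v) ∈ LinearMap.ker π := by
    rw [ker_eq, LinearMap.mem_ker, ← LinearMap.comp_apply, hσι, LinearMap.comp_apply, map_sub,
      ← Module.End.mul_apply, hρ, sub_self, map_zero]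
  have := LinearMap.congr_fun hπι (v - ρ v)
  have hzero : π' (ι (v - ρ v)) = 0 := Subtype.ext mem_ker
  exact (sub_eq_zero.1 (this.symm.trans hzero)).symm

variable {𝒳 : Set (ModuleCat.{u} R)}

theorem IsResolving.range_mem_of_isIdempotentElem (h𝒳 : IsResolving R 𝒳) {X : ModuleCat.{u} R}
    (hX : X ∈ 𝒳) {π : Module.End R X} (hπ : IsIdempotentElem π) :
    ModuleCat.of R (LinearMap.range π) ∈ 𝒳 :=
  h𝒳.summandClosed _ (.of R (LinearMap.ker π)) <| h𝒳.isoClosed hX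
    (Submodule.prodEquivOfIsCompl _ _ (LinearMap.IsIdempotentElem.isCompl hπ)).symm

namespace IsRightApprox

variable {X C : ModuleCat.{u} R} {f : X →ₗ[R] C}

theorem surjective (h𝒳 : IsResolving R 𝒳) (hf : IsRightApprox R 𝒳 f) :
    Function.Surjective f := fun c ↦ by
  obtain ⟨h, hh⟩ := hf.2 _ h𝒳.self_mem (LinearMap.toSpanSingleton R C c)
  exact ⟨h 1, (LinearMap.congr_fun hh 1).trans (one_smul R c)⟩

theorem nontrivial_ker (h𝒳 : IsResolving R 𝒳) (hf : IsRightApprox R 𝒳 f) (hC : C ∉ 𝒳) :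
    Nontrivial (LinearMap.ker f) := by
  rw [Submodule.nontrivial_iff_ne_bot]
  exact fun hbot ↦ hC <| h𝒳.isoClosed hf.1 <|
    LinearEquiv.ofBijective f ⟨LinearMap.ker_eq_bot.1 hbot, hf.surjective h𝒳⟩

theorem range_of_isIdempotentElem (h𝒳 : IsResolving R 𝒳) (hf : IsRightApprox R 𝒳 f)
    {π : Module.End R X} (hπ : IsIdempotentElem π) (hfπ : f ∘ₗ π = f) :
    IsRightApprox R 𝒳 (X := .of R (LinearMap.range π)) (f ∘ₗ (LinearMap.range π).subtype) := by
  refine ⟨h𝒳.range_mem_of_isIdempotentElem hf.1 hπ, fun W hW g ↦ ?_⟩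
  obtain ⟨h, rfl⟩ := hf.2 W hW g
  exact ⟨π.rangeRestrict ∘ₗ h, congrArg (· ∘ₗ h) hfπ⟩

end IsRightApprox

theorem HasRightApprox.exists_isRightMinimal [IsNoetherianRing R] [HenselianLocalRing R]
    (h𝒳 : IsResolving R 𝒳) {C : ModuleCat.{u} R} (hC : HasRightApprox R 𝒳 C) :
    ∃ (X : ModuleCat.{u} R) (f : X →ₗ[R] C), IsRightApprox R 𝒳 f ∧ IsRightMinimal f := by
  obtain ⟨X, f, hf⟩ := hC
  have := h𝒳.finite X hf.1
  obtain ⟨π, hπ, hfπ, hmin⟩ := exists_isIdempotentElem_isRightMinimal f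
  exact ⟨_, _, hf.range_of_isIdempotentElem h𝒳 hπ hfπ, hmin⟩

theorem MemCC.hasRightApprox {C : ModuleCat.{u} R} (hC : MemCC R 𝒳 C) : HasRightApprox R 𝒳 C :=
  have ⟨X₀, _, _, f, hX₀, _, h⟩ := hC
  ⟨X₀, f, hX₀, fun W hW ↦ (h W hW).1⟩

theorem MemCC.hasRightApprox_ker {X C : ModuleCat.{u} R} (hC : MemCC R 𝒳 C) {f : X →ₗ[R] C}
    (hf : IsRightApprox R 𝒳 f) (hmin : IsRightMinimal f) :
    HasRightApprox R 𝒳 (.of R (LinearMap.ker f)) := by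
  obtain ⟨X₀, X₁, g, f₀, hX₀, hX₁, h⟩ := hC
  have hf₀g : f₀ ∘ₗ g = 0 := ((h X₁ hX₁).2 g).2 ⟨LinearMap.id, rfl⟩
  obtain ⟨s, hs⟩ : ∃ s : X →ₗ[R] X₀, f₀ ∘ₗ s = f := (h X hf.1).1 f
  obtain ⟨r₀, hr₀⟩ := hf.2 X₀ hX₀ f₀
  obtain ⟨r, hr, hrs⟩ := hmin.exists_leftInverse hs hr₀
  have mem_ker (x : X₁) : (r ∘ₗ g) x ∈ LinearMap.ker f := by
    rw [LinearMap.mem_ker, ← LinearMap.comp_apply, ← LinearMap.comp_assoc, hr, hf₀g,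
      LinearMap.zero_apply]
  refine ⟨X₁, (r ∘ₗ g).codRestrict _ mem_ker, hX₁, fun W hW φ ↦ ?_⟩
  let ι : LinearMap.ker f →ₗ[R] X := (LinearMap.ker f).subtype
  obtain ⟨ψ, hψ⟩ : ∃ ψ : W →ₗ[R] X₁, g ∘ₗ ψ = s ∘ₗ ι ∘ₗ φ := by
    refine ((h W hW).2 _).1 ?_
    change f₀ ∘ₗ s ∘ₗ ι ∘ₗ φ = 0
    rw [← LinearMap.comp_assoc, hs, ← LinearMap.comp_assoc, f.comp_ker_subtype,
      LinearMap.zero_comp]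
  refine ⟨ψ, LinearMap.ext fun w ↦ Subtype.ext ?_⟩
  calc r (g (ψ w)) = r (s (φ w)) := congrArg r (LinearMap.congr_fun hψ w)
    _ = φ w := LinearMap.congr_fun hrs _

end MinimalApproximations

section Wakamatsu

variable {R : Type u} [CommRing R] {𝒳 : Set (ModuleCat.{u} R)}

variable {A B C A' : ModuleCat.{u} R}

/-- The relations defining the pushout of `φ : A → A'` and `f : A → B` as a quotient of
`A' × B`. -/
def pushoutRelations (φ : A →ₗ[R] A') (f : A →ₗ[R] B) : Submodule R (A' × B) :=
  LinearMap.range (φ.prod (-f))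

theorem mkQ_pushoutRelations_eq_zero {φ : A →ₗ[R] A'} {f : A →ₗ[R] B} {x : A'} {y : B} :
    (pushoutRelations φ f).mkQ (x, y) = 0 ↔ ∃ z, φ z = x ∧ -f z = y := by
  rw [Submodule.mkQ_apply, Submodule.Quotient.mk_eq_zero]
  exact exists_congr fun z ↦ Prod.mk_inj

theorem exists_comp_mkQ_pushoutRelations_eq_coprod {φ : A →ₗ[R] A'} {f : A →ₗ[R] B}
    {D : ModuleCat.{u} R} {u : A' →ₗ[R] D} {v : B →ₗ[R] D} (huv : u ∘ₗ φ = v ∘ₗ f) :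
    ∃ w, w ∘ₗ (pushoutRelations φ f).mkQ = u.coprod v := by
  refine ⟨(pushoutRelations φ f).liftQ (u.coprod v) ?_, Submodule.liftQ_mkQ _ _ _⟩
  rw [pushoutRelations, LinearMap.range_le_ker_iff, LinearMap.coprod_comp_prod, huv,
    LinearMap.comp_neg, add_neg_cancel]

theorem IsSES.isSES_pushout {f : A →ₗ[R] B} {g : B →ₗ[R] C} (h : IsSES R f g) (φ : A →ₗ[R] A')
    {b : ((A' × B) ⧸ pushoutRelations φ f) →ₗ[R] C}
    (hb : b ∘ₗ (pushoutRelations φ f).mkQ = g ∘ₗ .snd R A' B) :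
    IsSES R (B := .of R _) ((pushoutRelations φ f).mkQ ∘ₗ .inl R A' B) b := by
  have hb' (x : A') (y : B) : b ((pushoutRelations φ f).mkQ (x, y)) = g y :=
    LinearMap.congr_fun hb (x, y)
  refine ⟨(injective_iff_map_eq_zero _).2 fun x hx ↦ ?_, fun z ↦ ⟨fun hz ↦ ?_, ?_⟩, fun c ↦ ?_⟩
  · obtain ⟨z, rfl, hz⟩ := mkQ_pushoutRelations_eq_zero.1 hx
    rw [h.1 ((neg_eq_zero.1 hz).trans (map_zero f).symm), map_zero]
  · obtain ⟨⟨x, y⟩, rfl⟩ := Submodule.mkQ_surjective _ z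
    rw [hb'] at hz
    obtain ⟨z, rfl⟩ := (h.2.1 y).1 hz
    refine ⟨x + φ z, sub_eq_zero.1 ?_⟩
    rw [LinearMap.comp_apply, LinearMap.inl_apply, ← map_sub, Prod.mk_sub_mk, add_sub_cancel_left,
      zero_sub]
    exact mkQ_pushoutRelations_eq_zero.2 ⟨z, rfl, rfl⟩
  · rintro ⟨x, rfl⟩
    exact (hb' x 0).trans (map_zero g)
  · obtain ⟨y, rfl⟩ := h.2.2 c
    exact ⟨_, hb' 0 y⟩

theorem IsSES.exists_pushout {f : A →ₗ[R] B} {g : B →ₗ[R] C} (h : IsSES R f g)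
    (φ : A →ₗ[R] A') :
    ∃ (Q : ModuleCat.{u} R) (a : A' →ₗ[R] Q) (b : Q →ₗ[R] C) (q : B →ₗ[R] Q),
      IsSES R a b ∧ a ∘ₗ φ = q ∘ₗ f ∧
      ∀ {D : ModuleCat.{u} R} (u : A' →ₗ[R] D) (v : B →ₗ[R] D), u ∘ₗ φ = v ∘ₗ f →
        ∃ w : Q →ₗ[R] D, w ∘ₗ a = u ∧ w ∘ₗ q = v := by
  have hg : (0 : A' →ₗ[R] C) ∘ₗ φ = g ∘ₗ f := by rw [h.comp_eq_zero, LinearMap.zero_comp]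
  obtain ⟨b, hb⟩ := exists_comp_mkQ_pushoutRelations_eq_coprod hg
  rw [LinearMap.coprod_zero_left] at hb
  refine ⟨_, _, b, (pushoutRelations φ f).mkQ ∘ₗ .inr R A' B, h.isSES_pushout φ hb,
    LinearMap.ext fun z ↦ sub_eq_zero.1 ?_, fun u v huv ↦ ?_⟩
  · simp only [LinearMap.comp_apply, ← map_sub, LinearMap.inl_apply, LinearMap.inr_apply,
      Prod.mk_sub_mk, sub_zero, zero_sub]
    exact mkQ_pushoutRelations_eq_zero.2 ⟨z, rfl, rfl⟩
  · obtain ⟨w, hw⟩ := exists_comp_mkQ_pushoutRelations_eq_coprod huv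
    exact ⟨w, by rw [← LinearMap.comp_assoc, hw, LinearMap.coprod_inl],
      by rw [← LinearMap.comp_assoc, hw, LinearMap.coprod_inr]⟩

variable {X : ModuleCat.{u} R} {f : X →ₗ[R] C}

-- Push a presentation of `W` out along `φ : K → ker f ⊆ X`; the result is an extension `Q` of `W`
-- by `X`, so `Q ∈ 𝒳`, and minimality splits `X → Q` over `C`.
theorem IsRightApprox.extVanish_one_ker (h𝒳 : IsResolving R 𝒳) (hf : IsRightApprox R 𝒳 f)
    (hmin : IsRightMinimal f) {W : ModuleCat.{u} R} (hW : W ∈ 𝒳) :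
    ExtVanish R 1 W (.of R (LinearMap.ker f)) := by
  have := h𝒳.finite W hW
  obtain ⟨F, p, _, _, hp⟩ := exists_free_cover W
  refine (isSES_ker hp).extVanish_one_of_exists_extension extVanish_succ_of_projective fun φ ↦ ?_
  let ι : LinearMap.ker f →ₗ[R] X := (LinearMap.ker f).subtype
  obtain ⟨Q, a, b, q, hses, haq, exists_desc⟩ := (isSES_ker hp).exists_pushout (ι ∘ₗ φ)
  have hQ : Q ∈ 𝒳 := h𝒳.extClosed _ _ _ _ _ hses hf.1 hW
  obtain ⟨c, hca, hcq⟩ := exists_desc f 0 <| by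
    rw [← LinearMap.comp_assoc, f.comp_ker_subtype, LinearMap.zero_comp, LinearMap.zero_comp]
  obtain ⟨r₀, hr₀⟩ := hf.2 Q hQ c
  obtain ⟨r, hr, hra⟩ := hmin.exists_leftInverse hca hr₀
  have mem_ker (x : F) : (r ∘ₗ q) x ∈ LinearMap.ker f := by
    rw [LinearMap.mem_ker, ← LinearMap.comp_apply, ← LinearMap.comp_assoc, hr, hcq,
      LinearMap.zero_apply]
  refine ⟨(r ∘ₗ q).codRestrict _ mem_ker, LinearMap.ext fun z ↦ Subtype.ext ?_⟩
  calc r (q z) = r (a (φ z)) := congrArg r (LinearMap.congr_fun haq z).symm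
    _ = φ z := LinearMap.congr_fun hra _

theorem IsResolving.extVanish_of_forall_extVanish_one (h𝒳 : IsResolving R 𝒳) {N : ModuleCat.{u} R}
    (h : ∀ W ∈ 𝒳, ExtVanish R 1 W N) (i : ℕ) : ∀ W ∈ 𝒳, ExtVanish R (i + 1) W N := by
  induction i with
  | zero => exact h
  | succ i ih =>
    intro W hW
    have := h𝒳.finite W hW
    obtain ⟨F, p, hF, hfree, hp⟩ := exists_free_cover W
    have ker_mem : ModuleCat.of R (LinearMap.ker p) ∈ 𝒳 :=
      h𝒳.kerClosed _ _ _ _ _ (isSES_ker hp) (h𝒳.freeMem F hF hfree) hW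
    exact (isSES_ker hp).extVanish_from_quotient extVanish_succ_of_projective (ih _ ker_mem)

theorem IsSES.middle_mem_xPerp {f : A →ₗ[R] B} {g : B →ₗ[R] C} (h : IsSES R f g)
    [Module.Finite R B] (hA : A ∈ XPerp R 𝒳) (hC : C ∈ XPerp R 𝒳) : B ∈ XPerp R 𝒳 :=
  ⟨‹_›, fun W hW i hi ↦ h.extVanish_to_middle (hA.2 W hW i hi) (hC.2 W hW i hi)⟩

variable [IsNoetherianRing R]

theorem IsRightApprox.ker_mem_xPerp (h𝒳 : IsResolving R 𝒳) (hf : IsRightApprox R 𝒳 f)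
    (hmin : IsRightMinimal f) : ModuleCat.of R (LinearMap.ker f) ∈ XPerp R 𝒳 := by
  have := h𝒳.finite X hf.1
  refine ⟨inferInstanceAs (Module.Finite R (LinearMap.ker f)), fun W hW i hi ↦ ?_⟩
  obtain ⟨i, rfl⟩ := Nat.exists_eq_add_one.2 hi
  exact h𝒳.extVanish_of_forall_extVanish_one (fun _ ↦ hf.extVanish_one_ker h𝒳 hmin) i W hW

theorem MemCC.exists_nontrivial_mem_xPerp [HenselianLocalRing R] (h𝒳 : IsResolving R 𝒳)
    (hC : MemCC R 𝒳 C) (hC𝒳 : C ∉ 𝒳) : ∃ Y ∈ 𝒳, Y ∈ XPerp R 𝒳 ∧ Nontrivial Y := by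
  obtain ⟨X, f, hf, hfmin⟩ := hC.hasRightApprox.exists_isRightMinimal h𝒳
  obtain ⟨Y, g, hg, hgmin⟩ := (hC.hasRightApprox_ker hf hfmin).exists_isRightMinimal h𝒳
  have := h𝒳.finite Y hg.1
  have hgsurj := hg.surjective h𝒳
  have := hf.nontrivial_ker h𝒳 hC𝒳
  exact ⟨Y, hg.1, (isSES_ker hgsurj).middle_mem_xPerp (hg.ker_mem_xPerp h𝒳 hgmin)
    (hf.ker_mem_xPerp h𝒳 hfmin), hgsurj.nontrivial⟩

end Wakamatsu

section ProjectiveDimension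

variable {R : Type u} [CommRing R] [IsLocalRing R]

open TensorProduct in
theorem lTensor_residueField_injective {K F : ModuleCat.{u} R} (ι : K →ₗ[R] F)
    (hι : ∀ φ : K →ₗ[R] ResidueField R, ∃ ψ, ψ ∘ₗ ι = φ) :
    Function.Injective (ι.lTensor (ResidueField R)) := by
  change Function.Injective (ι.baseChange (ResidueField R))
  refine LinearMap.dualMap_surjective_iff.1 fun φ ↦ ?_
  obtain ⟨ψ, hψ⟩ := hι (φ.restrictScalars R ∘ₗ TensorProduct.mk R (ResidueField R) K 1)
  refine ⟨ψ.liftBaseChange (ResidueField R), ?_⟩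
  ext z
  simpa using LinearMap.congr_fun hψ z

theorem exists_surjective_residueField (Y : Type*) [AddCommGroup Y] [Module R Y]
    [Module.Finite R Y] [Nontrivial Y] :
    ∃ f : Y →ₗ[R] ResidueField R, Function.Surjective f := by
  obtain ⟨N, hN, -⟩ := (eq_top_or_exists_le_coatom (⊥ : Submodule R Y)).resolve_left bot_ne_top
  have : IsSimpleModule R (Y ⧸ N) := isSimpleModule_iff_isCoatom.2 hN
  obtain ⟨I, hI, ⟨e⟩⟩ := isSimpleModule_iff_quot_maximal.1 this
  obtain rfl := eq_maximalIdeal hI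
  exact ⟨e.toLinearMap ∘ₗ N.mkQ, e.surjective.comp N.mkQ_surjective⟩

variable [IsNoetherianRing R]

theorem free_of_extVanish_one_residueField {Z : ModuleCat.{u} R} [Module.Finite R Z]
    (h : ExtVanish R 1 Z (.of R (ResidueField R))) : Module.Free R Z := by
  obtain ⟨F, p, _, _, hp⟩ := exists_free_cover Z
  have hses := isSES_ker hp
  exact Module.free_of_lTensor_residueField_injective _ p hp hses.2.1 <|
    lTensor_residueField_injective _ (hses.exists_extension h)

theorem projDimLE_of_extVanish_residueField {p : ℕ} {Z : ModuleCat.{u} R} [Module.Finite R Z]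
    (h : ExtVanish R (p + 1) Z (.of R (ResidueField R))) : ProjDimLE R Z p := by
  intro N i hi
  obtain ⟨i, rfl⟩ := Nat.exists_eq_add_one.2 (Nat.zero_lt_of_lt hi)
  induction p generalizing Z i with
  | zero =>
    have := free_of_extVanish_one_residueField h
    exact extVanish_succ_of_projective
  | succ p ih =>
    obtain ⟨F, q, _, _, hq⟩ := exists_free_cover Z
    have hses := isSES_ker hq
    obtain ⟨i, rfl⟩ := Nat.exists_eq_add_one.2 (Nat.zero_lt_of_lt (Nat.lt_of_succ_lt_succ hi))
    exact hses.extVanish_from_quotient extVanish_succ_of_projective <|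
      ih (hses.extVanish_from_sub extVanish_succ_of_projective h) i (Nat.lt_of_succ_lt_succ hi)

-- `Ext^(p+1)(Y, Y)` surjects onto `Ext^(p+1)(Y, k)` once `Ext^(p+2)(Y, -) = 0`.
theorem free_of_projDimLE {Y : ModuleCat.{u} R} [Module.Finite R Y] [Nontrivial Y]
    (hY : ∀ i, 0 < i → ExtVanish R i Y Y) {p : ℕ} (hp : ProjDimLE R Y p) : Module.Free R Y := by
  induction p with
  | zero => exact free_of_extVanish_one_residueField (hp _ 1 Nat.one_pos)
  | succ p ih =>
    obtain ⟨f, hf⟩ := exists_surjective_residueField (R := R) Y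
    exact ih <| projDimLE_of_extVanish_residueField <|
      (isSES_ker (C := .of R (ResidueField R)) hf).extVanish_to_quotient (hY _ p.succ_pos)
        (hp _ _ (Nat.lt_succ_self _))

end ProjectiveDimension

section GARC

variable {R : Type u} [CommRing R]

/-- The generalized Auslander–Reiten condition (GARC) on a ring `R`. -/
def SatisfiesGARC (R : Type u) [CommRing R] : Prop :=
  ∀ M : ModuleCat.{u} R, Module.Finite R M → ∀ n : ℕ,
    (∀ i, n < i → ExtVanish R i M (.of R (M × R))) → ProjDimLE R M n

theorem SatisfiesGARC.free [IsNoetherianRing R] [IsLocalRing R] (hGARC : SatisfiesGARC R)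
    (hG : IsGorensteinLocalRing R) {Y : ModuleCat.{u} R} [Module.Finite R Y] [Nontrivial Y]
    (hY : ∀ i, 0 < i → ExtVanish R i Y Y) : Module.Free R Y := by
  obtain ⟨n, hn⟩ := hG
  refine free_of_projDimLE hY (hGARC Y ‹_› n fun i hi ↦ ?_)
  exact (isSES_inl_snd Y (.of R R)).extVanish_to_middle (hY i (Nat.zero_lt_of_lt hi))
    (hn Y ‹_› i hi)

theorem self_mem_xPerp_of_free {𝒳 : Set (ModuleCat.{u} R)} {Y : ModuleCat.{u} R}
    (hY : Y ∈ XPerp R 𝒳) [Module.Free R Y] [Nontrivial Y] : ModuleCat.of R R ∈ XPerp R 𝒳 := by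
  let b := Module.Free.chooseBasis R Y
  obtain ⟨j⟩ := b.index_nonempty
  refine ⟨Module.Finite.self R, fun W hW i hi ↦ (hY.2 W hW i hi).retract_right
    (LinearMap.toSpanSingleton R Y (b j)) (b.coord j) ?_⟩
  ext
  simp

end GARC

/-- Over a henselian Gorenstein local ring of positive dimension
satisfying (GARC), `𝒳` is strictly contained in `𝒞(𝒳)` iff every module in `𝒳` is
maximal Cohen–Macaulay. -/
theorem stmt12 (R : Type u) [CommRing R] [IsNoetherianRing R] [IsLocalRing R]
    [HenselianLocalRing R] (hG : IsGorensteinLocalRing R) (hdim : 0 < ringKrullDim R)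
    (hGARC : ∀ M : ModuleCat.{u} R, Module.Finite R M → ∀ n : ℕ,
      (∀ i, n < i → ExtVanish R i M (ModuleCat.of R (↥M × R))) → ProjDimLE R M n)
    (𝒳 : Set (ModuleCat.{u} R)) (h𝒳 : IsResolving R 𝒳) :
    (∃ C : ModuleCat.{u} R, Module.Finite R C ∧ MemCC R 𝒳 C ∧ C ∉ 𝒳) ↔
      ∀ M ∈ 𝒳, IsMCM R M := by
  obtain ⟨n, hn⟩ := exists_injDimEq hG
  have n_pos : 0 < n := by
    rw [hn.ringKrullDim_eq] at hdim
    exact_mod_cast hdim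
  constructor
  · rintro ⟨C, -, hC, hC𝒳⟩ W hW
    obtain ⟨Y, hY𝒳, hY, _⟩ := hC.exists_nontrivial_mem_xPerp h𝒳 hC𝒳
    have := hY.1
    have : Module.Free R Y := SatisfiesGARC.free hGARC hG (hY.2 Y hY𝒳)
    have := h𝒳.finite W hW
    exact (hn.isMCM_iff W).2 ((self_mem_xPerp_of_free hY).2 W hW)
  · exact hn.exists_memCC_notMem n_pos h𝒳
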